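/- Assume τ > (σ_max + σ_max,m+1)/2 and δ < τ − σ_max,m+1, and let r ∈ ℝ^{M+N} satisfy Π̃_m r = r. Then for every j ∈ ℕ there exists w ∈ K_j(B̃_m, r) such that ‖B̃_m w + r‖ ≤ 2 · (1 − 2/(1 + √((τ + σ_max,m+1 + δ)/(τ − σ_max,m+1 − δ))))^j · ‖r‖. -/

import Mathlib

open Matrix

noncomputable def vnorm {ι : Type*} [Fintype ι] (x : ι → ℝ) : ℝ :=
  Real.sqrt (∑ i, x i ^ 2)

noncomputable def specNorm {ι κ : Type*} [Fintype ι] [Fintype κ] [DecidableEq κ]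
    (A : Matrix ι κ ℝ) : ℝ :=
  ‖LinearMap.toContinuousLinearMap (Matrix.toEuclideanLin A)‖

noncomputable def Krylov {ι : Type*} [Fintype ι] [DecidableEq ι]
    (B : Matrix ι ι ℝ) (r : ι → ℝ) (j : ℕ) : Submodule ℝ (ι → ℝ) :=
  Submodule.span ℝ {x | ∃ i < j, x = (B ^ i) *ᵥ r}

open Polynomial in
theorem aux_cheb (τ g : ℝ) (hg : 0 ≤ g) (hgτ : g < τ) (j : ℕ) :
    ∃ f : ℝ[X], f.natDegree ≤ j ∧ f.eval τ = 1 ∧ ∀ t : ℝ, |t| ≤ g →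
      |f.eval t| ≤ 2 * (1 - 2 / (1 + Real.sqrt ((τ + g) / (τ - g)))) ^ j := by
  rcases Nat.eq_zero_or_pos j with rfl | hj
  · exact ⟨1, by simp, by simp, by intro t _; simp⟩
  have hτ : 0 < τ := lt_of_le_of_lt hg hgτ
  rcases hg.eq_or_lt with h0 | hpos
  · subst h0
    refine ⟨C (1 / τ) * X, ?_, ?_, ?_⟩
    · exact ((natDegree_C_mul_le _ _).trans natDegree_X_le).trans hj
    · simp [hτ.ne']
    · intro t ht
      have : t = 0 := abs_eq_zero.mp (le_antisymm ht (abs_nonneg t))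
      subst this
      have : (1 + 1 : ℝ) = 2 := by norm_num
      simp [hτ.ne', this, hj.ne']
  set x := Real.sqrt ((τ + g) / (τ - g)) with hx
  have hd : 0 < τ - g := by linarith
  have hxx : x ^ 2 = (τ + g) / (τ - g) := Real.sq_sqrt (by positivity)
  have hx1 : 1 < x := by
    rw [hx, Real.lt_sqrt (by norm_num), lt_div_iff₀ hd]; linarith
  have hxx2 : x ^ 2 * (τ - g) = τ + g := by rw [hxx]; field_simp
  set q := 1 - 2 / (1 + x) with hq
  have hqe : q = (x - 1) / (x + 1) := by rw [hq]; field_simp; ring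
  have hq0 : 0 < q := by rw [hqe]; apply div_pos <;> linarith
  have hcosh : Real.cosh (- Real.log q) = τ / g := by
    rw [Real.cosh_neg, Real.cosh_eq, Real.exp_neg, Real.exp_log hq0, hqe, inv_div]
    have h1 : x - 1 ≠ 0 := by linarith
    have h2 : x + 1 ≠ 0 := by linarith
    field_simp
    linear_combination (-2 : ℝ) * hxx2
  have hT : (q ^ j)⁻¹ / 2 ≤ (Chebyshev.T ℝ j).eval (τ / g) := by
    rw [← hcosh, Chebyshev.T_real_cosh, Real.cosh_eq]
    have h1 : Real.exp (((j : ℤ) : ℝ) * -Real.log q) = (q ^ j)⁻¹ := by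
      rw [mul_neg, Real.exp_neg, Int.cast_natCast, Real.exp_nat_mul, Real.exp_log hq0]
    rw [h1]
    have := (Real.exp_pos (-(((j : ℤ) : ℝ) * -Real.log q))).le
    linarith
  have hTpos : 0 < (Chebyshev.T ℝ j).eval (τ / g) := lt_of_lt_of_le (by positivity) hT
  refine ⟨C (1 / (Chebyshev.T ℝ j).eval (τ / g)) * (Chebyshev.T ℝ j).comp (C (1 / g) * X), ?_, ?_, ?_⟩
  · refine (natDegree_C_mul_le _ _).trans (natDegree_comp_le.trans ?_)
    have h1 : (Chebyshev.T ℝ (j : ℤ)).natDegree ≤ j := by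
      rw [Chebyshev.natDegree_T]; simp
    calc _ ≤ j * 1 := Nat.mul_le_mul h1 ((natDegree_C_mul_le _ _).trans natDegree_X_le)
      _ = j := by simp
  · rw [eval_mul, eval_C, eval_comp, eval_mul, eval_C, eval_X, one_div_mul_eq_div]
    field_simp
  · intro t ht
    rw [eval_mul, eval_C, eval_comp, eval_mul, eval_C, eval_X, one_div_mul_eq_div, one_div_mul_eq_div,
      abs_div, abs_of_pos hTpos, div_le_iff₀ hTpos]
    have h1 : |(Chebyshev.T ℝ j).eval (t / g)| ≤ 1 := by
      apply Chebyshev.abs_eval_T_real_le_one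
      rw [abs_div, abs_of_pos hpos, div_le_one hpos]; exact ht
    refine h1.trans ?_
    calc (1 : ℝ) = 2 * q ^ j * ((q ^ j)⁻¹ / 2) := by field_simp
      _ ≤ _ := by gcongr

theorem aux_vnorm {ι : Type*} [Fintype ι] (x : ι → ℝ) : vnorm x = ‖WithLp.toLp 2 x‖ := by
  rw [EuclideanSpace.norm_eq, vnorm]; simp

theorem aux_vnorm_nonneg {ι : Type*} [Fintype ι] (x : ι → ℝ) : 0 ≤ vnorm x := Real.sqrt_nonneg _

theorem aux_vnorm_sq {ι : Type*} [Fintype ι] (x : ι → ℝ) : vnorm x ^ 2 = x ⬝ᵥ x := by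
  rw [vnorm, Real.sq_sqrt (Finset.sum_nonneg fun i _ => sq_nonneg _), dotProduct]
  simp [sq]

theorem aux_spec {ι κ : Type*} [Fintype ι] [Fintype κ] [DecidableEq κ] (A : Matrix ι κ ℝ)
    (x : κ → ℝ) : vnorm (A *ᵥ x) ≤ specNorm A * vnorm x := by
  rw [aux_vnorm, aux_vnorm]
  exact (LinearMap.toContinuousLinearMap (Matrix.toEuclideanLin A)).le_opNorm (WithLp.toLp 2 x)

open scoped Matrix.Norms.L2Operator in
theorem aux_spec_tr {ι κ : Type*} [Fintype ι] [Fintype κ] [DecidableEq κ] [DecidableEq ι]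
    (A : Matrix ι κ ℝ) : specNorm Aᵀ = specNorm A := by
  have := Matrix.l2_opNorm_conjTranspose A
  rw [Matrix.conjTranspose_eq_transpose_of_trivial] at this
  exact this

theorem aux_pow_mulVec {ι : Type*} [Fintype ι] [DecidableEq ι] (G : Matrix ι ι ℝ)
    (hG : Gᵀ = G) (b x : ι → ℝ) (l : ℝ) (hb : G *ᵥ b = l • b) (n : ℕ) :
    b ⬝ᵥ ((G ^ n) *ᵥ x) = l ^ n * (b ⬝ᵥ x) := by
  induction n with
  | zero => simp
  | succ n ih =>
    rw [pow_succ', ← mulVec_mulVec, dotProduct_mulVec, ← mulVec_transpose, hG, hb, smul_dotProduct,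
      ih, smul_eq_mul]; ring

open Polynomial in
theorem aux_poly_mulVec {ι : Type*} [Fintype ι] [DecidableEq ι] (G : Matrix ι ι ℝ)
    (x : ι → ℝ) (f : ℝ[X]) (n : ℕ) (hn : f.natDegree < n) :
    (aeval G f) *ᵥ x = ∑ i ∈ Finset.range n, f.coeff i • ((G ^ i) *ᵥ x) := by
  rw [aeval_eq_sum_range' hn, sum_mulVec]
  simp only [smul_mulVec]

open Polynomial in
theorem aux_spectral {ι : Type*} [Fintype ι] [DecidableEq ι] (G : Matrix ι ι ℝ)
    (hG : Gᵀ = G) (g c : ℝ) (hq : ∀ x, |x ⬝ᵥ (G *ᵥ x)| ≤ g * (x ⬝ᵥ x)) (f : ℝ[X])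
    (hf : ∀ t, |t| ≤ g → |f.eval t| ≤ c) (hc : 0 ≤ c) (r : ι → ℝ) :
    vnorm ((aeval G f) *ᵥ r) ≤ c * vnorm r := by
  have hH : G.IsHermitian := by
    rw [Matrix.IsHermitian, Matrix.conjTranspose_eq_transpose_of_trivial]; exact hG
  set b := hH.eigenvectorBasis with hb
  have hin : ∀ i (y : ι → ℝ), inner ℝ (b i) (WithLp.toLp 2 y) = (b i : ι → ℝ) ⬝ᵥ y := by
    intro i y
    rw [EuclideanSpace.inner_eq_star_dotProduct, dotProduct_comm]; simp
  have hev : ∀ i, G *ᵥ (b i : ι → ℝ) = hH.eigenvalues i • (b i : ι → ℝ) :=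
    fun i => hH.mulVec_eigenvectorBasis i
  have hbb : ∀ i, (b i : ι → ℝ) ⬝ᵥ (b i : ι → ℝ) = 1 := by
    intro i
    rw [← hin]
    have := b.orthonormal.1 i
    rw [real_inner_self_eq_norm_sq]
    erw [this]; norm_num
  have hl : ∀ i, |hH.eigenvalues i| ≤ g := by
    intro i
    have := hq (b i : ι → ℝ)
    rw [hev, dotProduct_smul, hbb] at this
    simpa using this
  have hfr : ∀ i, (b i : ι → ℝ) ⬝ᵥ ((aeval G f) *ᵥ r) = f.eval (hH.eigenvalues i) * ((b i : ι → ℝ) ⬝ᵥ r) := by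
    intro i
    rw [aux_poly_mulVec G r f _ (Nat.lt_succ_self _), dotProduct_sum, eval_eq_sum_range, Finset.sum_mul]
    refine Finset.sum_congr rfl fun k _ => ?_
    rw [dotProduct_smul, aux_pow_mulVec G hG _ r _ (hev i), smul_eq_mul]; ring
  rw [aux_vnorm, aux_vnorm]
  refine le_of_sq_le_sq ?_ (by positivity)
  rw [mul_pow, ← b.sum_sq_norm_inner_right, ← b.sum_sq_norm_inner_right, Finset.mul_sum]
  refine Finset.sum_le_sum fun i _ => ?_
  rw [hin, hin, hfr, norm_mul, mul_pow]
  gcongr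
  exact hf _ (hl i)

open Polynomial in
theorem aux_krylov {ι : Type*} [Fintype ι] [DecidableEq ι] (H P Bm : Matrix ι ι ℝ)
    (hH : Hᵀ = H) (hPt : Pᵀ = P) (hPP : P * P = P) (τ g : ℝ) (hg : 0 ≤ g) (hgτ : g < τ)
    (hq : ∀ x, |x ⬝ᵥ ((P * H * P) *ᵥ x)| ≤ g * (x ⬝ᵥ x))
    (hBm : Bm = P * ((-τ) • 1 + H) * P) (r : ι → ℝ) (hr : P *ᵥ r = r) (j : ℕ) :
    ∃ w ∈ Krylov Bm r j, vnorm (Bm *ᵥ w + r) ≤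
      2 * (1 - 2 / (1 + Real.sqrt ((τ + g) / (τ - g)))) ^ j * vnorm r := by
  obtain ⟨f, hdeg, hone, hbd⟩ := aux_cheb τ g hg hgτ j
  set c := 2 * (1 - 2 / (1 + Real.sqrt ((τ + g) / (τ - g)))) ^ j with hcdef
  have hc : 0 ≤ c := (abs_nonneg _).trans (hbd 0 (by simpa using hg))
  have hGt : (P * H * P)ᵀ = P * H * P := by
    rw [transpose_mul, transpose_mul, hH, hPt, Matrix.mul_assoc]
  have key := aux_spectral (P * H * P) hGt g c hq f hbd hc r
  set F : ℝ[X] := f.comp (X + C τ) with hF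
  have hF0 : F.coeff 0 = 1 := by
    rw [coeff_zero_eq_eval_zero, hF, eval_comp]; simp [hone]
  have hFdeg : F.natDegree ≤ j := by
    rw [hF, natDegree_comp, natDegree_X_add_C, mul_one]; exact hdeg
  -- powers
  have hPB : P * Bm = Bm := by rw [hBm, ← Matrix.mul_assoc, ← Matrix.mul_assoc, hPP]
  have hPpow : ∀ i, P *ᵥ ((Bm ^ i) *ᵥ r) = (Bm ^ i) *ᵥ r := by
    intro i
    cases i with
    | zero => simpa using hr
    | succ n => rw [pow_succ', mulVec_mulVec, ← Matrix.mul_assoc, hPB]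
  set C' := P * H * P - algebraMap ℝ (Matrix ι ι ℝ) τ with hC'
  have hpow : ∀ i, (C' ^ i) *ᵥ r = (Bm ^ i) *ᵥ r := by
    intro i
    induction i with
    | zero => simp
    | succ n ih =>
      rw [pow_succ', ← mulVec_mulVec, ih, pow_succ', ← mulVec_mulVec]
      have hy := hPpow n
      set y := (Bm ^ n) *ᵥ r
      have h1 : Bm = P * H * P + (-τ) • P := by
        rw [hBm, Matrix.mul_add, Matrix.add_mul, Matrix.mul_smul, Matrix.smul_mul, Matrix.mul_one, hPP, add_comm]
      rw [h1, hC', sub_mulVec, add_mulVec, smul_mulVec, hy, Algebra.algebraMap_eq_smul_one, smul_mulVec,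
        one_mulVec, neg_smul, sub_eq_add_neg]
  have hFC : aeval C' F = aeval (P * H * P) f := by
    rw [hF, aeval_comp]; simp [hC']
  rw [← hFC, aux_poly_mulVec C' r F (j + 1) (by omega), Finset.sum_range_succ'] at key
  refine ⟨∑ i ∈ Finset.range j, F.coeff (i + 1) • ((Bm ^ i) *ᵥ r), ?_, ?_⟩
  · refine Submodule.sum_mem _ fun i hi => Submodule.smul_mem _ _ (Submodule.subset_span ?_)
    exact ⟨i, Finset.mem_range.mp hi, rfl⟩
  · convert key using 2
    rw [hF0, pow_zero, one_mulVec, one_smul]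
    congr 1
    rw [mulVec_sum]
    refine Finset.sum_congr rfl fun i _ => ?_
    rw [mulVec_smul, mulVec_mulVec, ← pow_succ', hpow]

theorem aux_orth {ι κ : Type*} [Fintype ι] [Fintype κ] [DecidableEq κ] (Q : Matrix ι κ ℝ)
    (hQ : Qᵀ * Q = 1) (x : κ → ℝ) : vnorm (Q *ᵥ x) = vnorm x := by
  have h : vnorm (Q *ᵥ x) ^ 2 = vnorm x ^ 2 := by
    rw [aux_vnorm_sq, aux_vnorm_sq, dotProduct_mulVec, ← mulVec_transpose, mulVec_mulVec, hQ,
      one_mulVec]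
  exact (sq_eq_sq₀ (aux_vnorm_nonneg _) (aux_vnorm_nonneg _)).mp h

theorem aux_proj {ι κ : Type*} [Fintype ι] [Fintype κ] [DecidableEq ι] [DecidableEq κ]
    (Q : Matrix ι κ ℝ) (hQ : Qᵀ * Q = 1) :
    (1 - Q * Qᵀ)ᵀ = 1 - Q * Qᵀ ∧ (1 - Q * Qᵀ) * (1 - Q * Qᵀ) = 1 - Q * Qᵀ := by
  constructor
  · simp
  · have : Q * Qᵀ * (Q * Qᵀ) = Q * Qᵀ := by
      rw [Matrix.mul_assoc, ← Matrix.mul_assoc Qᵀ, hQ, Matrix.one_mul]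
    rw [Matrix.sub_mul, Matrix.mul_sub, Matrix.mul_sub, this]; simp

theorem aux_sin {M m : ℕ} (hmM : m ≤ M)
    (U : Matrix (Fin M) (Fin M) ℝ) (Um R : Matrix (Fin M) (Fin m) ℝ) (Q : Matrix (Fin M) (Fin M) ℝ)
    (hUm : ∀ i j, Um i j = U i (Fin.castLE hmM j)) (hQ : Qᵀ = Q) (hR : R = Q * Um)
    (u : Fin M → ℝ) (hu : Q *ᵥ u = u) :
    Real.sqrt (∑ j : Fin m, ((Uᵀ *ᵥ u) (Fin.castLE hmM j)) ^ 2) ≤ specNorm R * vnorm u := by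
  have h1 : Rᵀ *ᵥ u = fun j : Fin m => (Uᵀ *ᵥ u) (Fin.castLE hmM j) := by
    rw [hR, transpose_mul, hQ, ← mulVec_mulVec, hu]
    ext j
    simp [mulVec, dotProduct, hUm]
  have := aux_spec Rᵀ u
  rw [aux_spec_tr, h1] at this
  exact this

theorem aux_bil {M N m : ℕ} (hMN : N ≤ M) (hmN : m < N)
    (A : Matrix (Fin M) (Fin N) ℝ)
    (U : Matrix (Fin M) (Fin M) ℝ) (V : Matrix (Fin N) (Fin N) ℝ)
    (hU : Uᵀ * U = 1) (hV : Vᵀ * V = 1)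
    (σ : Fin N → ℝ) (hσ : ∀ i, 0 ≤ σ i)
    (S : Matrix (Fin M) (Fin N) ℝ)
    (hS : ∀ i j, S i j = if (i : ℕ) = (j : ℕ) then σ j else 0)
    (hA : A = U * S * Vᵀ) (s : ℝ) (hs0 : 0 ≤ s) (hs : ∀ i : Fin N, m ≤ (i : ℕ) → σ i ≤ s)
    (u : Fin M → ℝ) (v : Fin N → ℝ) (p q : ℝ) (hp : 0 ≤ p) (hq : 0 ≤ q)
    (hu : Real.sqrt (∑ j : Fin m,
      ((Uᵀ *ᵥ u) (Fin.castLE (hmN.le.trans hMN) j)) ^ 2) ≤ p * vnorm u)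
    (hv : Real.sqrt (∑ j : Fin m, ((Vᵀ *ᵥ v) (Fin.castLE hmN.le j)) ^ 2) ≤ q * vnorm v) :
    |u ⬝ᵥ (A *ᵥ v)| ≤ (s + specNorm A * (p + q) ^ 2) * (vnorm u * vnorm v) := by
  have hnA0 : 0 ≤ specNorm A := norm_nonneg _
  have hSapp : ∀ (b : Fin N → ℝ) (j : Fin N), (S *ᵥ b) (Fin.castLE hMN j) = σ j * b j := by
    intro b j
    simp only [mulVec, dotProduct, hS, Fin.val_castLE]
    rw [Finset.sum_eq_single j]
    · simp
    · intro k _ hk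
      rw [if_neg (fun h => hk (Fin.ext h.symm)), zero_mul]
    · simp
  have hnA : ∀ i, σ i ≤ specNorm A := by
    intro i
    have h := aux_spec A (V *ᵥ Pi.single i 1)
    rw [aux_orth V hV, hA, mulVec_mulVec, Matrix.mul_assoc, hV, Matrix.mul_one, ← mulVec_mulVec,
      aux_orth U hU, ← hA] at h
    have h1 : vnorm (Pi.single i (1 : ℝ) : Fin N → ℝ) = 1 := by
      have : vnorm (Pi.single i (1 : ℝ) : Fin N → ℝ) ^ 2 = 1 := by
        rw [aux_vnorm_sq]; simp
      nlinarith [aux_vnorm_nonneg (Pi.single i (1 : ℝ) : Fin N → ℝ)]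
    rw [h1, mul_one] at h
    refine le_trans ?_ h
    have h2 := hSapp (Pi.single i 1) i
    rw [Pi.single_eq_same, mul_one] at h2
    apply Real.le_sqrt_of_sq_le
    rw [← h2]
    exact Finset.single_le_sum (f := fun k => (S *ᵥ Pi.single i 1) k ^ 2)
      (fun k _ => sq_nonneg _) (Finset.mem_univ _)
  set a := Uᵀ *ᵥ u with ha
  set b := Vᵀ *ᵥ v with hb
  have hna : vnorm a = vnorm u := aux_orth _ (by rw [transpose_transpose]; exact mul_eq_one_comm.mp hU) u
  have hnb : vnorm b = vnorm v := aux_orth _ (by rw [transpose_transpose]; exact mul_eq_one_comm.mp hV) v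
  have hsumM : ∀ f : Fin M → ℝ, (∀ k : Fin M, N ≤ (k : ℕ) → f k = 0) →
      ∑ k, f k = ∑ j : Fin N, f (Fin.castLE hMN j) := by
    intro f hf
    symm
    rw [← Finset.sum_image (s := Finset.univ) (g := Fin.castLE hMN) (f := f)
      (by intro x _ y _ h; exact Fin.castLE_injective hMN h)]
    refine Finset.sum_subset (Finset.subset_univ _) fun k _ hk => hf k ?_
    by_contra hlt
    push Not at hlt
    exact hk (Finset.mem_image.mpr ⟨⟨k, hlt⟩, Finset.mem_univ _, rfl⟩)
  have hmain : u ⬝ᵥ (A *ᵥ v) = ∑ j : Fin N, a (Fin.castLE hMN j) * (σ j * b j) := by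
    rw [hA, ← mulVec_mulVec, ← mulVec_mulVec, dotProduct_mulVec, ← mulVec_transpose, ← ha, ← hb,
      dotProduct, hsumM]
    · simp only [hSapp]
    · intro k hk
      have : (S *ᵥ b) k = 0 := by
        simp only [mulVec, dotProduct, hS]
        refine Finset.sum_eq_zero fun j _ => ?_
        rw [if_neg (by have := j.isLt; omega), zero_mul]
      rw [this, mul_zero]
  have ha' : Real.sqrt (∑ j : Fin N, |a (Fin.castLE hMN j)| ^ 2) ≤ vnorm u := by
    rw [← hna]
    apply Real.sqrt_le_sqrt
    simp only [sq_abs]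
    rw [← Finset.sum_image (s := Finset.univ) (g := Fin.castLE hMN) (f := fun k => a k ^ 2)
      (by intro x _ y _ h; exact Fin.castLE_injective hMN h)]
    exact Finset.sum_le_sum_of_subset_of_nonneg (Finset.subset_univ _) (fun _ _ _ => sq_nonneg _)
  have hb' : Real.sqrt (∑ j : Fin N, |b j| ^ 2) ≤ vnorm v := by
    rw [← hnb]; simp only [sq_abs]; exact le_rfl
  have hCS1 : ∑ j : Fin N, |a (Fin.castLE hMN j)| * |b j| ≤ vnorm u * vnorm v :=
    (Real.sum_mul_le_sqrt_mul_sqrt _ _ _).trans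
      (mul_le_mul ha' hb' (Real.sqrt_nonneg _) (aux_vnorm_nonneg _))
  have hCS2 : ∑ j : Fin m, |a (Fin.castLE (hmN.le.trans hMN) j)| * |b (Fin.castLE hmN.le j)|
      ≤ (p * vnorm u) * (q * vnorm v) := by
    refine (Real.sum_mul_le_sqrt_mul_sqrt _ _ _).trans ?_
    simp only [sq_abs]
    exact mul_le_mul hu hv (Real.sqrt_nonneg _) (mul_nonneg hp (aux_vnorm_nonneg _))
  have hsplit : ∑ j : Fin N, (if (j : ℕ) < m then |a (Fin.castLE hMN j)| * |b j| else 0)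
      = ∑ j : Fin m, |a (Fin.castLE (hmN.le.trans hMN) j)| * |b (Fin.castLE hmN.le j)| := by
    symm
    rw [← Finset.sum_filter]
    refine Finset.sum_bij (fun j _ => Fin.castLE hmN.le j) ?_ ?_ ?_ ?_
    · intro j _; simp
    · intro x _ y _ h; exact Fin.castLE_injective _ h
    · intro k hk
      exact ⟨⟨k, (Finset.mem_filter.mp hk).2⟩, Finset.mem_univ _, rfl⟩
    · intro j _; rfl
  rw [hmain]
  calc |∑ j : Fin N, a (Fin.castLE hMN j) * (σ j * b j)|
      ≤ ∑ j : Fin N, |a (Fin.castLE hMN j) * (σ j * b j)| := Finset.abs_sum_le_sum_abs _ _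
    _ ≤ ∑ j : Fin N, (s * (|a (Fin.castLE hMN j)| * |b j|) +
          specNorm A * (if (j : ℕ) < m then |a (Fin.castLE hMN j)| * |b j| else 0)) := by
        refine Finset.sum_le_sum fun j _ => ?_
        rw [abs_mul, abs_mul, abs_of_nonneg (hσ j)]
        have h0 : 0 ≤ |a (Fin.castLE hMN j)| * |b j| := by positivity
        split_ifs with hj
        · nlinarith [mul_le_mul_of_nonneg_right (hnA j) h0, mul_nonneg hs0 h0]
        · nlinarith [mul_le_mul_of_nonneg_right (hs j (by omega)) h0]
    _ = s * (∑ j : Fin N, |a (Fin.castLE hMN j)| * |b j|) + specNorm A *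
          ∑ j : Fin m, |a (Fin.castLE (hmN.le.trans hMN) j)| * |b (Fin.castLE hmN.le j)| := by
        rw [Finset.sum_add_distrib, ← Finset.mul_sum, ← Finset.mul_sum, hsplit]
    _ ≤ s * (vnorm u * vnorm v) + specNorm A * ((p * vnorm u) * (q * vnorm v)) := by gcongr
    _ ≤ _ := by
        have h1 : 0 ≤ vnorm u * vnorm v := mul_nonneg (aux_vnorm_nonneg _) (aux_vnorm_nonneg _)
        have h2 : p * q ≤ (p + q) ^ 2 := by nlinarith [mul_nonneg hp hq]
        have h3 := mul_le_mul_of_nonneg_left (mul_le_mul_of_nonneg_right h2 h1) hnA0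
        nlinarith

/-- Theorem 4.4(i). MINRES bound for the preconditioned JDSVD correction
equation with approximate singular subspaces, in the case `τ > (σ_max + σ_max,m+1)/2`. -/
theorem minres_bound_precond_approx_largest {M N m : ℕ} (hN : 2 ≤ N) (hMN : N ≤ M)
    (hm : 1 ≤ m) (hmN : m < N)
    (A : Matrix (Fin M) (Fin N) ℝ)
    (U : Matrix (Fin M) (Fin M) ℝ) (V : Matrix (Fin N) (Fin N) ℝ)
    (hU : Uᵀ * U = 1) (hV : Vᵀ * V = 1)
    (σ : Fin N → ℝ) (hσ : ∀ i, 0 ≤ σ i)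
    (S : Matrix (Fin M) (Fin N) ℝ)
    (hS : ∀ i j, S i j = if (i : ℕ) = (j : ℕ) then σ j else 0)
    (hA : A = U * S * Vᵀ)
    (τ : ℝ) (hτ0 : 0 ≤ τ)
    (hclosest : ∀ i j : Fin N, (i : ℕ) < m → m ≤ (j : ℕ) → |σ i - τ| ≤ |σ j - τ|)
    (σmax σmaxm1 : ℝ)
    (hσmax : IsGreatest (Set.range σ) σmax)
    (hσmaxm1 : IsGreatest (σ '' {i : Fin N | m ≤ (i : ℕ)}) σmaxm1)
    (hτ : (σmax + σmaxm1) / 2 < τ)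
    (Um : Matrix (Fin M) (Fin m) ℝ)
    (hUm : ∀ i j, Um i j = U i ⟨(j : ℕ), by have := j.isLt; omega⟩)
    (Vm : Matrix (Fin N) (Fin m) ℝ)
    (hVm : ∀ i j, Vm i j = V i ⟨(j : ℕ), by have := j.isLt; omega⟩)
    (Ut : Matrix (Fin M) (Fin m) ℝ) (Vt : Matrix (Fin N) (Fin m) ℝ)
    (hUt : Utᵀ * Ut = 1) (hVt : Vtᵀ * Vt = 1)
    (δ : ℝ)
    (hδ : δ = specNorm A *
      (specNorm ((1 - Ut * Utᵀ) * Um) + specNorm ((1 - Vt * Vtᵀ) * Vm)) ^ 2)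
    (hδsmall : δ < τ - σmaxm1)
    (B P Bm : Matrix (Fin M ⊕ Fin N) (Fin M ⊕ Fin N) ℝ)
    (hB : B = Matrix.fromBlocks ((-τ) • 1) A Aᵀ ((-τ) • 1))
    (hP : P = Matrix.fromBlocks (1 - Ut * Utᵀ) 0 0 (1 - Vt * Vtᵀ))
    (hBm : Bm = P * B * P)
    (r : Fin M ⊕ Fin N → ℝ) (hr : P *ᵥ r = r) :
    ∀ j : ℕ, ∃ w ∈ Krylov Bm r j,
      vnorm (Bm *ᵥ w + r) ≤
        2 * (1 - 2 / (1 + Real.sqrt ((τ + σmaxm1 + δ) / (τ - σmaxm1 - δ)))) ^ j * vnorm r := by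
  have hs : ∀ i : Fin N, m ≤ (i : ℕ) → σ i ≤ σmaxm1 := fun i hi => hσmaxm1.2 ⟨i, hi, rfl⟩
  have hs0 : 0 ≤ σmaxm1 := by
    obtain ⟨i, _, hi⟩ := hσmaxm1.1
    rw [← hi]; exact hσ i
  have hδ0 : 0 ≤ δ := by
    rw [hδ]; exact mul_nonneg (norm_nonneg _) (sq_nonneg _)
  obtain ⟨hUtt, hUti⟩ := aux_proj Ut hUt
  obtain ⟨hVtt, hVti⟩ := aux_proj Vt hVt
  have hPt : Pᵀ = P := by
    rw [hP, fromBlocks_transpose, hUtt, hVtt]; simp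
  have hPP : P * P = P := by
    rw [hP, fromBlocks_multiply, hUti, hVti]; simp
  intro j
  have hHt : (fromBlocks 0 A Aᵀ 0 : Matrix (Fin M ⊕ Fin N) (Fin M ⊕ Fin N) ℝ)ᵀ
      = fromBlocks 0 A Aᵀ 0 := by
    rw [fromBlocks_transpose]; simp
  have hBH : B = (-τ) • 1 + fromBlocks 0 A Aᵀ 0 := by
    rw [hB, ← fromBlocks_one, fromBlocks_smul, fromBlocks_add]; simp
  have hquad : ∀ x, |x ⬝ᵥ ((P * fromBlocks 0 A Aᵀ 0 * P) *ᵥ x)| ≤ (σmaxm1 + δ) * (x ⬝ᵥ x) := by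
    intro x
    set u := (1 - Ut * Utᵀ) *ᵥ (x ∘ Sum.inl) with hu
    set v := (1 - Vt * Vtᵀ) *ᵥ (x ∘ Sum.inr) with hv
    have hPx : P *ᵥ x = Sum.elim u v := by
      rw [hP, fromBlocks_mulVec]; simp [hu, hv]
    have huu : (1 - Ut * Utᵀ) *ᵥ u = u := by rw [hu, mulVec_mulVec, hUti]
    have hvv : (1 - Vt * Vtᵀ) *ᵥ v = v := by rw [hv, mulVec_mulVec, hVti]
    have hxe : x ⬝ᵥ ((P * fromBlocks 0 A Aᵀ 0 * P) *ᵥ x) = 2 * (u ⬝ᵥ (A *ᵥ v)) := by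
      rw [← mulVec_mulVec, ← mulVec_mulVec, dotProduct_mulVec, ← mulVec_transpose, hPt, hPx,
        fromBlocks_mulVec]
      have : v ⬝ᵥ (Aᵀ *ᵥ u) = u ⬝ᵥ (A *ᵥ v) := by
        rw [mulVec_transpose, dotProduct_comm, ← dotProduct_mulVec]
      simp [this]; ring
    have hle : u ⬝ᵥ u + v ⬝ᵥ v ≤ x ⬝ᵥ x := by
      have h1 : (P *ᵥ x) ⬝ᵥ (P *ᵥ x) = x ⬝ᵥ (P *ᵥ x) := by
        rw [dotProduct_mulVec, ← mulVec_transpose, hPt, mulVec_mulVec, hPP, dotProduct_comm]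
      have h2 : 0 ≤ (x - P *ᵥ x) ⬝ᵥ (x - P *ᵥ x) := by
        rw [← aux_vnorm_sq]; positivity
      rw [sub_dotProduct, dotProduct_sub, dotProduct_sub, h1, dotProduct_comm (P *ᵥ x) x] at h2
      have h3 : u ⬝ᵥ u + v ⬝ᵥ v = (P *ᵥ x) ⬝ᵥ (P *ᵥ x) := by rw [hPx]; simp
      linarith
    have hbil := aux_bil hMN hmN A U V hU hV σ hσ S hS hA σmaxm1 hs0 hs u v _ _
      (norm_nonneg _) (norm_nonneg _)
      (aux_sin (hmN.le.trans hMN) U Um _ _ hUm hUtt rfl u huu)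
      (aux_sin hmN.le V Vm _ _ hVm hVtt rfl v hvv)
    change _ ≤ (σmaxm1 + specNorm A *
      (specNorm ((1 - Ut * Utᵀ) * Um) + specNorm ((1 - Vt * Vtᵀ) * Vm)) ^ 2) * _ at hbil
    rw [← hδ] at hbil
    rw [hxe, abs_mul, abs_two]
    have hg : 0 ≤ σmaxm1 + δ := by linarith
    have h4 : 2 * (vnorm u * vnorm v) ≤ x ⬝ᵥ x := by
      have := sq_nonneg (vnorm u - vnorm v)
      have e1 := aux_vnorm_sq u
      have e2 := aux_vnorm_sq v
      nlinarith
    nlinarith [mul_le_mul_of_nonneg_left h4 hg]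
  have := aux_krylov (fromBlocks 0 A Aᵀ 0) P Bm hHt hPt hPP τ (σmaxm1 + δ) (by linarith)
    (by linarith) hquad (by rw [hBm, hBH]) r hr j
  rwa [← add_assoc, ← sub_sub] at this
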